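/- Let G be a single-decision causal influence diagram with decision D and let X be a variable of G other than D. If there exist a parent W of D and a utility node U such that (1) G contains a directed path from X to W, (2) G contains a directed path from D to U, and (3) W is not d-separated from U by ({D} ∪ Pa_D) \ {W}, then there exists a SCIM compatible with G that has a response incentive on X. -/

import Mathlib

attribute [local instance] Classical.propDecidable

noncomputable section

/-! ### d-separation in a directed graph -/

/-- `b` is a collider on a path segment `a - b - c`. -/
def IsCollider {V : Type} (E : V → V → Prop) (a b c : V) : Prop := E a b ∧ E c b

/-- The triple `a - b - c` on an undirected path blocks the path w.r.t. `Z`: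
either the middle node is a non-collider (chain or fork) belonging to `Z`, or it is a
collider such that neither it nor any of its descendants belongs to `Z`. -/
def BlockedTriple {V : Type} (E : V → V → Prop) (Z : Set V) (a b c : V) : Prop :=
  (¬ IsCollider E a b c ∧ b ∈ Z) ∨
    (IsCollider E a b c ∧ ∀ w, Relation.ReflTransGen E b w → w ∉ Z)

/-- An undirected path: a nonempty list of distinct vertices in which consecutive
vertices are joined by an edge in one direction or the other. -/
def IsUPath {V : Type} (E : V → V → Prop) (p : List V) : Prop :=
  p ≠ [] ∧ p.Nodup ∧ p.Chain' (fun a b => E a b ∨ E b a)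

/-- A path is d-separated (blocked) by `Z` if some consecutive triple blocks it. -/
def BlockedPath {V : Type} (E : V → V → Prop) (Z : Set V) (p : List V) : Prop :=
  ∃ l₁ a b c l₂, p = l₁ ++ a :: b :: c :: l₂ ∧ BlockedTriple E Z a b c

/-- `Z` d-separates the node sets `S` and `T`: every undirected path from a node of `S`
to a node of `T` is blocked by `Z`. -/
def DSep {V : Type} (E : V → V → Prop) (S T Z : Set V) : Prop :=
  ∀ p : List V, IsUPath E p → (∃ s ∈ S, p.head? = some s) →
    (∃ t ∈ T, p.getLast? = some t) → BlockedPath E Z p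

/-! ### Causal influence diagrams and structural causal influence models -/

/-- A single-decision causal influence diagram: a finite DAG whose vertices are
partitioned into structure nodes, one decision node and utility nodes
(the utility nodes having no children). -/
structure CID (V : Type) where
  edge : V → V → Prop
  acyclic : ∀ v, ¬ Relation.TransGen edge v v
  decision : V
  utility : Finset V
  decision_not_utility : decision ∉ utility
  utility_no_children : ∀ u ∈ utility, ∀ v, ¬ edge u v

/-- A (single-decision) structural causal influence model over a CID: finite nonempty
domains for every variable, one finite-domain exogenous variable per variable, structural
functions for every non-decision variable, real-valued (injectively embedded, i.e. the
domain is a subset of ℝ) utility variables, and mutually independent exogenous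
distributions. -/
structure SCIM (V : Type) extends CID V where
  dom : V → Type
  dom_fintype : ∀ v, Fintype (dom v)
  dom_nonempty : ∀ v, Nonempty (dom v)
  edom : V → Type
  edom_fintype : ∀ v, Fintype (edom v)
  edom_nonempty : ∀ v, Nonempty (edom v)
  utilVal : ∀ v, dom v → ℝ
  utilVal_inj : ∀ v ∈ utility, Function.Injective (utilVal v)
  f : ∀ v, v ≠ decision → (∀ w, edge w v → dom w) → edom v → dom v
  μ : ∀ v, edom v → ℝ
  μ_nonneg : ∀ v e, 0 ≤ μ v e
  μ_sum : ∀ v, ∑ e ∈ @Finset.univ (edom v) (edom_fintype v), μ v e = 1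

variable {V : Type} [Fintype V] [DecidableEq V]

instance (M : SCIM V) (v : V) : Fintype (M.dom v) := M.dom_fintype v
instance (M : SCIM V) (v : V) : Nonempty (M.dom v) := M.dom_nonempty v
instance (M : SCIM V) (v : V) : Fintype (M.edom v) := M.edom_fintype v
instance (M : SCIM V) (v : V) : Nonempty (M.edom v) := M.edom_nonempty v

namespace SCIM

variable (M : SCIM V)

/-- A joint setting of the exogenous variables. -/
abbrev Env := ∀ v, M.edom v

/-- Joint probability of an exogenous setting (the exogenous variables are independent). -/
def prob (ε : M.Env) : ℝ := ∏ v, M.μ v (ε v)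

/-- The type of structural mechanisms for the vertex `v`. -/
def Mechanism (v : V) : Type := (∀ w, M.edge w v → M.dom w) → M.edom v → M.dom v

/-- A policy: a structural function for the decision node. -/
abbrev Policy := M.Mechanism M.decision

theorem edge_wf : WellFounded M.edge := by
  haveI : IsTrans V (Relation.TransGen M.edge) := ⟨fun _ _ _ h h' => h.trans h'⟩
  haveI : IsIrrefl V (Relation.TransGen M.edge) := ⟨M.acyclic⟩
  exact Subrelation.wf (fun h => Relation.TransGen.single h)
    (Finite.wellFounded_of_trans_of_irrefl _)

/-- The unique solution of the structural equations `mech` given exogenous setting `ε`. -/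
def solve (mech : ∀ v, M.Mechanism v) (ε : M.Env) : ∀ v, M.dom v :=
  WellFounded.fix (C := fun v => M.dom v) M.edge_wf
    (fun v IH => mech v (fun w hw => IH w hw) (ε v))

/-- The mechanisms of the SCM `M_π` obtained by fixing the policy `π`. -/
def polMech (π : M.Policy) : ∀ v, M.Mechanism v :=
  fun v => if h : v = M.decision then cast (congrArg M.Mechanism h).symm π else M.f v h

/-- Apply an intervention (a partial assignment `ι` of values) to mechanisms:
intervened variables are set to constants. -/
def doMech (mech : ∀ v, M.Mechanism v) (ι : ∀ v, Option (M.dom v)) : ∀ v, M.Mechanism v :=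
  fun v => match ι v with
    | some x => fun _ _ => x
    | none => mech v

/-- The single intervention `do(X = x)` as a partial assignment. -/
def single (X : V) (x : M.dom X) : ∀ v, Option (M.dom v) :=
  fun v => if h : v = X then some (cast (congrArg M.dom h).symm x) else none

/-- The value `W(ε)` of each variable in `M_π`. -/
def val (π : M.Policy) (ε : M.Env) : ∀ v, M.dom v := M.solve (M.polMech π) ε

/-- The potential response: the value of each variable in the submodel of `M_π`
given by the intervention `ι`. -/
def valDo (π : M.Policy) (ι : ∀ v, Option (M.dom v)) (ε : M.Env) : ∀ v, M.dom v :=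
  M.solve (M.doMech (M.polMech π) ι) ε

/-- Total utility of an assignment of values to the variables. -/
def totUtil (a : ∀ v, M.dom v) : ℝ := ∑ v ∈ M.utility, M.utilVal v (a v)

/-- Expected total utility of the policy `π`. -/
def EU (π : M.Policy) : ℝ := ∑ ε : M.Env, M.prob ε * M.totUtil (M.val π ε)

/-- An optimal policy maximizes expected total utility. -/
def Optimal (π : M.Policy) : Prop := ∀ π' : M.Policy, M.EU π' ≤ M.EU π

/-- A decision context: a joint value of the parents of the decision. -/
abbrev Ctx := ∀ w, M.edge w M.decision → M.dom w

/-- The decision context realized by the exogenous setting `ε` in `M_π`. -/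
def ctx (π : M.Policy) (ε : M.Env) : M.Ctx := fun w _ => M.val π ε w

/-- Probability of a decision context in `M_π`. -/
def ctxProb (π : M.Policy) (pa : M.Ctx) : ℝ :=
  ∑ ε : M.Env, if M.ctx π ε = pa then M.prob ε else 0

/-- Conditional expectation of `g` given the decision context `pa` in `M_π`. -/
def condExp (π : M.Policy) (pa : M.Ctx) (g : M.Env → ℝ) : ℝ :=
  (∑ ε : M.Env, if M.ctx π ε = pa then M.prob ε * g ε else 0) / M.ctxProb π pa

/-- The nested potential response `𝒰_{X_d}(ε)`: total utility when `X` is set to the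
value it would take under `do(D = d)`, everything else following `M_π`. -/
def nestedU (π : M.Policy) (X : V) (d : M.dom M.decision) (ε : M.Env) : ℝ :=
  M.totUtil (M.valDo π (M.single X (M.valDo π (M.single M.decision d) ε X)) ε)

/-- Control incentive on `X`: under every optimal policy, in some positive-probability
decision context some alternative decision `d` changes expected utility through `X`. -/
def ControlIncentive (X : V) : Prop :=
  ∀ π : M.Policy, M.Optimal π →
    ∃ pa : M.Ctx, 0 < M.ctxProb π pa ∧ ∃ d : M.dom M.decision,
      M.condExp π pa (M.nestedU π X d) ≠
        M.condExp π pa (fun ε => M.totUtil (M.val π ε))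

/-- Response incentive on `X`: under every optimal policy some intervention on `X`
changes the decision for some exogenous setting. -/
def ResponseIncentive (X : V) : Prop :=
  ∀ π : M.Policy, M.Optimal π →
    ∃ (x : M.dom X) (ε : M.Env),
      M.valDo π (M.single X x) ε M.decision ≠ M.val π ε M.decision

/-- Conditional probability of `event` given `cond` in `M_π`. -/
def cprob (π : M.Policy) (event cond : M.Env → Prop) : ℝ :=
  (∑ ε : M.Env, if cond ε ∧ event ε then M.prob ε else 0) /
    (∑ ε : M.Env, if cond ε then M.prob ε else 0)

/-- Counterfactual fairness of a policy `π` with respect to a protected attribute `A`: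
conditional on any positive-probability decision context and value of `A`, intervening
on `A` does not change the distribution of the decision. -/
def CFair (π : M.Policy) (A : V) : Prop :=
  ∀ (d : M.dom M.decision) (pa : M.Ctx) (a a' : M.dom A),
    (0 < ∑ ε : M.Env, if M.ctx π ε = pa ∧ M.val π ε A = a then M.prob ε else 0) →
      M.cprob π (fun ε => M.valDo π (M.single A a') ε M.decision = d)
          (fun ε => M.ctx π ε = pa ∧ M.val π ε A = a) =
        M.cprob π (fun ε => M.val π ε M.decision = d)
          (fun ε => M.ctx π ε = pa ∧ M.val π ε A = a)

/-- Expected value of the sum of utility variables in `S`. -/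
def EUOn (S : Finset V) (π : M.Policy) : ℝ :=
  ∑ ε : M.Env, M.prob ε * ∑ v ∈ S, M.utilVal v (M.val π ε v)

/-- The policy obtained from `π` by replacing the observations of the decision-parents
that are descendants of `X` by the fixed values `p`. -/
def modPolicy (π : M.Policy) (X : V) (p : M.Ctx) : M.Policy :=
  fun pa e =>
    π (fun w hw => if Relation.ReflTransGen M.edge X w then p w hw else pa w hw) e

end SCIM

/-- The graphical criterion for control incentives: a directed path `D ⇝ X ⇝ U`
for some utility node `U`. -/
def CICriterion {V : Type} (G : CID V) (X : V) : Prop :=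
  Relation.ReflTransGen G.edge G.decision X ∧
    ∃ u ∈ G.utility, Relation.ReflTransGen G.edge X u

/-- The graphical criterion for response incentives: a directed path from `X` to some
parent `W` of the decision `D`, a directed path from `D` to some utility node `U`, and
`W` d-connected to `U` given `({D} ∪ Pa_D) \ {W}`. -/
def RICriterion {V : Type} (G : CID V) (X : V) : Prop :=
  ∃ W, G.edge W G.decision ∧ ∃ u ∈ G.utility,
    Relation.ReflTransGen G.edge X W ∧
    Relation.ReflTransGen G.edge G.decision u ∧
    ¬ DSep G.edge {W} {u} (({G.decision} ∪ {w | G.edge w G.decision}) \ {W})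

end

/-! ### Graph-theoretic part: sources known to the decision -/

namespace CID

variable {V : Type} (G : CID V)

/-- The conditioning set `({D} ∪ Pa_D) \ {W}`. -/
def condSet (W : V) : Set V := ({G.decision} ∪ {w | G.edge w G.decision}) \ {W}

/-- `a` reaches `v` by a directed path all of whose nodes lie outside `condSet W`. -/
inductive HiddenReach (W a : V) : V → Prop
  | refl : a ∉ G.condSet W → HiddenReach W a a
  | tail {v w : V} : HiddenReach W a v → G.edge v w → w ∉ G.condSet W → HiddenReach W a w

/-- Sources whose secret bit the decision can recover, either because it reaches a parent of
the decision, or because its sum with an already known bit can be published by a collider. -/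
inductive Known (W : V) : V → Prop
  | obs {a w : V} : G.HiddenReach W a w → G.edge w G.decision → Known W a
  | link {s a p q c : V} : Known W s → G.HiddenReach W s p → G.edge p c →
      G.HiddenReach W a q → G.edge q c → Relation.TransGen G.edge c G.decision → Known W a

variable {G} {W : V}

theorem HiddenReach.notMem {a v : V} (h : G.HiddenReach W a v) : v ∉ G.condSet W := by
  cases h <;> assumption

theorem HiddenReach.source_notMem {a v : V} (h : G.HiddenReach W a v) : a ∉ G.condSet W := by
  induction h with
  | refl h => exact h
  | tail _ _ _ ih => exact ih

theorem not_edge_self (v : V) : ¬ G.edge v v := fun h => G.acyclic v (.single h)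

theorem notMem_utility_of_edge {v w : V} (h : G.edge v w) : v ∉ G.utility :=
  fun hv => G.utility_no_children v hv w h

theorem ne_decision_of_notMem (hW : G.edge W G.decision) {v : V} (h : v ∉ G.condSet W) :
    v ≠ G.decision := by
  rintro rfl
  exact h ⟨Or.inl rfl, fun h' => not_edge_self (G := G) W (by rw [← h'] at hW ⊢; exact hW)⟩

theorem notMem_condSet_self : W ∉ G.condSet W := fun h => h.2 rfl

theorem transGen_of_reach_condSet {c z : V} (hz : z ∈ G.condSet W)
    (h : Relation.ReflTransGen G.edge c z) (hc : c ≠ G.decision) :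
    Relation.TransGen G.edge c G.decision := by
  rcases hz.1 with hz | hz
  · rw [Set.mem_singleton_iff.1 hz] at h
    rcases Relation.reflTransGen_iff_eq_or_transGen.1 h with h | h
    · exact absurd h.symm hc
    · exact h
  · exact Relation.TransGen.tail' h hz

/-- The state of a traversal of an active path when it stands at `v`, coming from `prev`. -/
def Travel (G : CID V) (W prev v : V) : Prop :=
  (G.edge v prev ∧ ∀ a, G.HiddenReach W a v → G.Known W a) ∨
    (∃ s, G.Known W s ∧ G.HiddenReach W s prev ∧ G.edge prev v)

theorem exists_known_of_travel (hW : G.edge W G.decision) {u : V} (hu : u ∈ G.utility) :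
    ∀ (l : List V) (a b : V), G.Travel W a b →
      (a :: b :: l).IsChain (fun a b => G.edge a b ∨ G.edge b a) →
      (a :: b :: l).getLast? = some u →
      ¬ BlockedPath G.edge (G.condSet W) (a :: b :: l) →
      ∃ T p, G.Known W T ∧ G.HiddenReach W T p ∧ G.edge p u
  | [], a, b, ht, _, hl, _ => by
    obtain rfl : b = u := by simpa using hl
    rcases ht with ⟨h, _⟩ | ⟨s, hs, hr, he⟩
    · exact absurd h (G.utility_no_children _ hu _)
    · exact ⟨s, a, hs, hr, he⟩
  | c :: l, a, b, ht, hch, hl, hb => by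
    have hch' : (b :: c :: l).IsChain (fun a b => G.edge a b ∨ G.edge b a) := by
      rw [List.isChain_cons_cons] at hch; exact hch.2
    have hb' : ¬ BlockedPath G.edge (G.condSet W) (b :: c :: l) := by
      rintro ⟨l₁, x, y, z, l₂, h, h'⟩
      exact hb ⟨a :: l₁, x, y, z, l₂, by rw [h]; rfl, h'⟩
    have hl' : (b :: c :: l).getLast? = some u := by simpa using hl
    have htr : ¬ BlockedTriple G.edge (G.condSet W) a b c := fun h =>
      hb ⟨[], a, b, c, l, rfl, h⟩
    refine exists_known_of_travel hW hu l b c ?_ hch' hl' hb'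
    have hbc : G.edge b c ∨ G.edge c b := by
      rw [List.isChain_cons_cons] at hch'; exact hch'.1
    have asymm : ∀ x y, G.edge x y → ¬ G.edge y x := fun x y h h' =>
      G.acyclic x ((Relation.TransGen.single h).tail h')
    rcases hbc with hbc | hcb
    · have hbZ : b ∉ G.condSet W := fun h =>
        htr (Or.inl ⟨fun hcol => asymm _ _ hbc hcol.2, h⟩)
      right
      rcases ht with ⟨_, hk⟩ | ⟨s, hs, hr, he⟩
      · exact ⟨b, hk b (.refl hbZ), .refl hbZ, hbc⟩
      · exact ⟨s, hs, hr.tail he hbZ, hbc⟩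
    · left
      refine ⟨hcb, fun x hx => ?_⟩
      rcases ht with ⟨hba, hk⟩ | ⟨s, hs, hr, he⟩
      · have hbZ : b ∉ G.condSet W := fun h =>
          htr (Or.inl ⟨fun hcol => asymm _ _ hba hcol.1, h⟩)
        exact hk x (hx.tail hcb hbZ)
      · by_cases hbD : b = G.decision
        · exact .obs hx (hbD ▸ hcb)
        · have : ∃ z, Relation.ReflTransGen G.edge b z ∧ z ∈ G.condSet W := by
            by_contra hcon
            exact htr (Or.inr ⟨⟨he, hcb⟩, fun w hw hwZ => hcon ⟨w, hw, hwZ⟩⟩)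
          obtain ⟨z, hz, hzZ⟩ := this
          exact .link hs hr he hx hcb (transGen_of_reach_condSet hzZ hz hbD)

theorem exists_known (hW : G.edge W G.decision) {u : V} (hu : u ∈ G.utility)
    (h : ¬ DSep G.edge {W} {u} (G.condSet W)) :
    ∃ T p, G.Known W T ∧ G.HiddenReach W T p ∧ G.edge p u := by
  simp only [DSep, not_forall] at h
  obtain ⟨p, hp, ⟨s, hs, hps⟩, ⟨t, ht, hpt⟩, hb⟩ := h
  obtain rfl : s = W := hs
  obtain rfl : t = u := ht
  match p, hps, hpt, hb, hp with
  | [x], hps, hpt, _, _ =>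
    simp only [List.head?_cons, Option.some.injEq, List.getLast?_singleton] at hps hpt
    subst hps hpt
    exact absurd hW (G.utility_no_children _ hu _)
  | x :: y :: l, hps, hpt, hb, hp =>
    obtain rfl : x = s := by simpa using hps
    have hxy : G.edge x y ∨ G.edge y x := (List.isChain_cons_cons.1 hp.2.2).1
    refine exists_known_of_travel hW hu l x y ?_ hp.2.2 hpt hb
    rcases hxy with h | h
    · exact Or.inr ⟨x, .obs (.refl notMem_condSet_self) hW, .refl notMem_condSet_self, h⟩
    · exact Or.inl ⟨h, fun a ha => .obs (ha.tail h notMem_condSet_self) hW⟩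

end CID

/-! ### The message-passing model -/

/-- The value of a node: a gate signal emitted by `X`, the action of the decision, the known
secret bits of source nodes, and the known sums of pairs of secret bits. -/
@[ext]
structure Message (V : Type) where
  gate : Prop
  act : Prop
  sec : V → Bool → Prop
  sum : V → V → Bool → Prop

namespace Message

variable {V : Type}

instance [Finite V] : Finite (Message V) :=
  Finite.of_injective
    (fun m : Message V => (m.gate, m.act, m.sec, m.sum)) (by
      intro m m' h
      simp only [Prod.mk.injEq] at h
      exact Message.ext h.1 h.2.1 h.2.2.1 h.2.2.2)

/-- The message without any information. -/
def empty : Message V := ⟨False, False, fun _ _ => False, fun _ _ _ => False⟩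

/-- The message with all information. -/
def full : Message V := ⟨True, True, fun _ _ => True, fun _ _ _ => True⟩

theorem exists_utility [Finite V] :
    ∃ g : Message V → ℝ, Function.Injective g ∧ g empty < g full := by
  obtain ⟨n, ⟨e⟩⟩ := Finite.exists_equiv_fin (Message V)
  have hinj : Function.Injective (fun m => ((e m : ℕ) : ℝ)) := fun a b h =>
    e.injective (Fin.ext (Nat.cast_injective h))
  have hne : (empty : Message V) ≠ full := fun h => by
    have := congrArg Message.gate h
    simp [empty, full] at this
  rcases lt_or_gt_of_ne (hinj.ne hne) with h | h
  · exact ⟨_, hinj, h⟩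
  · exact ⟨fun m => -((e m : ℕ) : ℝ), fun a b h => hinj (neg_injective h), neg_lt_neg h⟩

end Message

namespace CID

variable {V : Type} (G : CID V)

/-- The message of a structure node. Only nodes outside the conditioning set carry secret bits,
and `W` carries them only if it receives the gate signal. Apart from its action, the output of
the decision is ignored. -/
def relay (X W v : V) (inp : ∀ w, G.edge w v → Message V) (e : Bool) : Message V where
  gate := v = X ∨ ∃ w, ∃ h : G.edge w v, w ≠ G.decision ∧ (inp w h).gate
  act := ∃ w, ∃ h : G.edge w v, (inp w h).act
  sec a b := v ∉ G.condSet W ∧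
    (v = W → v = X ∨ ∃ w, ∃ h : G.edge w v, w ≠ G.decision ∧ (inp w h).gate) ∧
    ((a = v ∧ e = b) ∨ ∃ w, ∃ h : G.edge w v, w ≠ G.decision ∧ (inp w h).sec a b)
  sum a a' b := (∃ w, ∃ h : G.edge w v, w ≠ G.decision ∧ (inp w h).sum a a' b) ∨
    ∃ c, (∃ w, ∃ h : G.edge w v, w ≠ G.decision ∧ (inp w h).sec a c) ∧
      ∃ w, ∃ h : G.edge w v, w ≠ G.decision ∧ (inp w h).sec a' (xor c b)

/-- The utility node is satisfied if the action agrees with the secret bit of `T`. -/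
def Wins (T v : V) (inp : ∀ w, G.edge w v → Message V) : Prop :=
  (∃ w, ∃ h : G.edge w v, (inp w h).act) ↔
    ∃ w, ∃ h : G.edge w v, w ≠ G.decision ∧ (inp w h).sec T true

/-- The structural functions of the message-passing model. -/
noncomputable def messageFun (X W T u v : V) (inp : ∀ w, G.edge w v → Message V) (e : Bool) : Message V :=
  if v ∈ G.utility then (if v = u ∧ G.Wins T v inp then .full else .empty)
  else G.relay X W v inp e

/-- The assignment `m` solves the structural equations outside the decision. -/
def Solves (X W : V) (ε : V → Bool) (m : V → Message V) : Prop :=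
  ∀ v, v ≠ G.decision → v ∉ G.utility → m v = G.relay X W v (fun w _ => m w) (ε v)

/-- The assignment `m` solves the structural equations outside the decision, with `X` silenced. -/
def SolvesSilenced (X W : V) (ε : V → Bool) (m : V → Message V) : Prop :=
  ∀ v, v ≠ G.decision → v ∉ G.utility →
    m v = if v = X then .empty else G.relay X W v (fun w _ => m w) (ε v)

/-- An assignment of secret bits agrees with everything seen in the decision context. -/
def Consistent (σ : V → Bool) (inp : ∀ w, G.edge w G.decision → Message V) : Prop :=
  ∀ w, ∀ h : G.edge w G.decision, (∀ a b, (inp w h).sec a b → σ a = b) ∧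
    ∀ a a' b, (inp w h).sum a a' b → xor (σ a) (σ a') = b

variable {G} {X W : V} {ε ε' : V → Bool} {m m' : V → Message V}

theorem edge_induction [Finite V] {P : V → Prop} (h : ∀ v, (∀ w, G.edge w v → P w) → P v)
    (v : V) : P v := by
  have : IsTrans V (Relation.TransGen G.edge) := ⟨fun _ _ _ h h' => h.trans h'⟩
  have : Std.Irrefl (Relation.TransGen G.edge) := ⟨G.acyclic⟩
  have wf : WellFounded G.edge := Subrelation.wf (fun h => Relation.TransGen.single h)
    (Finite.wellFounded_of_trans_of_irrefl (Relation.TransGen G.edge))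
  exact wf.induction v h

theorem ne_decision_of_transGen {v : V} (h : Relation.TransGen G.edge v G.decision) :
    v ≠ G.decision := by
  rintro rfl
  exact G.acyclic _ h

theorem notMem_utility_of_transGen {v w : V} (h : Relation.TransGen G.edge v w) :
    v ∉ G.utility := by
  obtain ⟨c, hc, _⟩ := Relation.TransGen.head'_iff.1 h
  exact notMem_utility_of_edge hc

namespace Solves

theorem sound [Finite V] (hm : G.Solves X W ε m) (v : V) : v ≠ G.decision → v ∉ G.utility →
    (∀ a b, (m v).sec a b → ε a = b) ∧ ∀ a a' b, (m v).sum a a' b → xor (ε a) (ε a') = b := by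
  induction v using edge_induction (G := G) with
  | h v ih =>
    intro hv hu
    rw [hm v hv hu]
    refine ⟨fun a b h => ?_, fun a a' b h => ?_⟩
    · rcases h.2.2 with ⟨rfl, h⟩ | ⟨w, hw, hwD, h⟩
      · exact h
      · exact (ih w hw hwD (notMem_utility_of_edge hw)).1 a b h
    · rcases h with ⟨w, hw, hwD, h⟩ | ⟨c, ⟨w, hw, hwD, h⟩, ⟨w', hw', hwD', h'⟩⟩
      · exact (ih w hw hwD (notMem_utility_of_edge hw)).2 a a' b h
      · rw [(ih w hw hwD (notMem_utility_of_edge hw)).1 a c h,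
          (ih w' hw' hwD' (notMem_utility_of_edge hw')).1 a' _ h']
        cases c <;> cases b <;> rfl

theorem gate (hm : G.Solves X W ε m) {v : V} (h : Relation.ReflTransGen G.edge X v)
    (hv : Relation.TransGen G.edge v G.decision) : (m v).gate := by
  induction h with
  | refl =>
    rw [hm _ (ne_decision_of_transGen hv) (notMem_utility_of_transGen hv)]
    exact Or.inl rfl
  | @tail b c _ hbc ih =>
    have hb := hv.head hbc
    rw [hm _ (ne_decision_of_transGen hv) (notMem_utility_of_transGen hv)]
    exact Or.inr ⟨b, hbc, ne_decision_of_transGen hb, ih hb⟩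

theorem sec_of_hiddenReach (hm : G.Solves X W ε m) (hW : G.edge W G.decision)
    (hX : Relation.ReflTransGen G.edge X W) {a v : V} (h : G.HiddenReach W a v)
    (hv : v ∉ G.utility) : (m v).sec a (ε a) := by
  have hg : ∀ w, w = W → w = X ∨ ∃ w', ∃ _ : G.edge w' w, w' ≠ G.decision ∧ (m w').gate := by
    rintro w rfl
    have := hm.gate hX (.single hW)
    rw [hm w (ne_decision_of_transGen (.single hW)) (notMem_utility_of_edge hW)] at this
    exact this
  induction h with
  | refl h =>
    rw [hm _ (ne_decision_of_notMem hW h) hv]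
    exact ⟨h, hg _, Or.inl ⟨rfl, rfl⟩⟩
  | @tail x y hx hxy hy ih =>
    rw [hm _ (ne_decision_of_notMem hW hy) hv]
    exact ⟨hy, hg _, Or.inr ⟨x, hxy, ne_decision_of_notMem hW hx.notMem,
      ih (notMem_utility_of_edge hxy)⟩⟩

theorem exists_parent_sum (hm : G.Solves X W ε m) {c a a' : V} {b : Bool}
    (hc : Relation.TransGen G.edge c G.decision) (h : (m c).sum a a' b) :
    ∃ w, G.edge w G.decision ∧ (m w).sum a a' b := by
  induction hc using Relation.TransGen.head_induction_on with
  | single hc => exact ⟨_, hc, h⟩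
  | @head x y hxy hy ih =>
    refine ih ?_
    rw [hm y (ne_decision_of_transGen hy) (notMem_utility_of_transGen hy)]
    exact Or.inl ⟨x, hxy, ne_decision_of_transGen (hy.head hxy), h⟩

theorem eq_of_consistent (hm : G.Solves X W ε m) (hW : G.edge W G.decision)
    (hX : Relation.ReflTransGen G.edge X W) {σ : V → Bool}
    (hσ : G.Consistent σ (fun w _ => m w)) {a : V} (ha : G.Known W a) : σ a = ε a := by
  induction ha with
  | obs h hw =>
    exact (hσ _ hw).1 _ _ (hm.sec_of_hiddenReach hW hX h (notMem_utility_of_edge hw))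
  | @link s a p q c _ hp hpc hq hqc hc ih =>
    have hsum : (m c).sum s a (xor (ε s) (ε a)) := by
      rw [hm c (ne_decision_of_transGen hc) (notMem_utility_of_transGen hc)]
      refine Or.inr ⟨ε s, ⟨p, hpc, ne_decision_of_notMem hW hp.notMem,
        hm.sec_of_hiddenReach hW hX hp (notMem_utility_of_edge hpc)⟩,
        ⟨q, hqc, ne_decision_of_notMem hW hq.notMem, ?_⟩⟩
      rw [← Bool.xor_assoc, Bool.xor_self, Bool.false_xor]
      exact hm.sec_of_hiddenReach hW hX hq (notMem_utility_of_edge hqc)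
    obtain ⟨w, hw, h⟩ := hm.exists_parent_sum hc hsum
    have := (hσ w hw).2 _ _ _ h
    rw [ih] at this
    exact Bool.xor_right_inj.1 this

theorem consistent [Finite V] (hm : G.Solves X W ε m) : G.Consistent ε (fun w _ => m w) :=
  fun w hw => hm.sound w (ne_decision_of_transGen (.single hw)) (notMem_utility_of_edge hw)

theorem act_of_decision (hm : G.Solves X W ε m) (h : (m G.decision).act) {v : V}
    (hv : Relation.ReflTransGen G.edge G.decision v) (hu : v ∉ G.utility) : (m v).act := by
  induction hv with
  | refl => exact h
  | @tail x y hx hxy ih =>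
    rw [hm y (by rintro rfl; exact G.acyclic _ (Relation.TransGen.tail' hx hxy)) hu]
    exact ⟨x, hxy, ih (notMem_utility_of_edge hxy)⟩

theorem decision_act [Finite V] (hm : G.Solves X W ε m) (v : V) :
    v ∉ G.utility → (m v).act → (m G.decision).act := by
  induction v using edge_induction (G := G) with
  | h v ih =>
    intro hu h
    by_cases hv : v = G.decision
    · exact hv ▸ h
    · rw [hm v hv hu] at h
      obtain ⟨w, hw, h⟩ := h
      exact ih w hw (notMem_utility_of_edge hw) h

theorem wins_iff [Finite V] (hm : G.Solves X W ε m) (hW : G.edge W G.decision)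
    (hX : Relation.ReflTransGen G.edge X W) {T p u : V} (hT : G.HiddenReach W T p)
    (hp : G.edge p u) (hu : u ∈ G.utility) (hDu : Relation.ReflTransGen G.edge G.decision u) :
    G.Wins T u (fun w _ => m w) ↔ ((m G.decision).act ↔ ε T = true) := by
  refine iff_congr ⟨?_, fun h => ?_⟩ ⟨?_, fun h => ?_⟩
  · rintro ⟨w, hw, h⟩
    exact hm.decision_act w (notMem_utility_of_edge hw) h
  · rcases Relation.ReflTransGen.cases_tail hDu with h' | ⟨w, hw, hwu⟩
    · exact absurd (h' ▸ hu) G.decision_not_utility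
    · exact ⟨w, hwu, hm.act_of_decision h hw (notMem_utility_of_edge hwu)⟩
  · rintro ⟨w, hw, hwD, h⟩
    exact (hm.sound w hwD (notMem_utility_of_edge hw)).1 _ _ h
  · refine ⟨p, hp, ne_decision_of_notMem hW hT.notMem, ?_⟩
    rw [← h]
    exact hm.sec_of_hiddenReach hW hX hT (notMem_utility_of_edge hp)

end Solves

namespace SolvesSilenced

theorem not_gate [Finite V] (hm : G.SolvesSilenced X W ε m) (v : V) :
    v ≠ G.decision → v ∉ G.utility → ¬ (m v).gate := by
  induction v using edge_induction (G := G) with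
  | h v ih =>
    intro hv hu
    rw [hm v hv hu]
    split_ifs with hvX
    · exact id
    · rintro (h | ⟨w, hw, hwD, h⟩)
      · exact hvX h
      · exact ih w hw hwD (notMem_utility_of_edge hw) h

theorem notMem_of_sec [Finite V] (hm : G.SolvesSilenced X W ε m) {v : V} (hv : v ≠ G.decision)
    (hu : v ∉ G.utility) {a : V} {b : Bool} (h : (m v).sec a b) :
    v ∉ G.condSet W ∧ v ≠ W := by
  rw [hm v hv hu] at h
  split_ifs at h with hvX
  · exact h.elim
  · refine ⟨h.1, fun hvW => ?_⟩
    rcases h.2.1 hvW with h | ⟨w, hw, hwD, h⟩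
    · exact hvX h
    · exact hm.not_gate w hwD (notMem_utility_of_edge hw) h

theorem flip [Finite V] (hm : G.SolvesSilenced X W ε m) (hm' : G.SolvesSilenced X W ε' m')
    (hε : ∀ v, v ≠ G.decision → ε' v = !ε v) (v : V) : v ≠ G.decision → v ∉ G.utility →
    (∀ a b, (m v).sec a b → (m' v).sec a (!b)) ∧
      ∀ a a' b, (m v).sum a a' b → (m' v).sum a a' b := by
  induction v using edge_induction (G := G) with
  | h v ih =>
    intro hv hu
    have hsec := fun a b => hm.notMem_of_sec hv hu (a := a) (b := b)
    rw [hm v hv hu] at hsec ⊢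
    rw [hm' v hv hu]
    split_ifs at hsec ⊢ with hvX
    · exact ⟨fun _ _ h => h.elim, fun _ _ _ h => h.elim⟩
    refine ⟨fun a b h => ⟨h.1, fun hvW => absurd hvW (hsec a b h).2, ?_⟩, fun a a' b h => ?_⟩
    · rcases h.2.2 with ⟨rfl, h⟩ | ⟨w, hw, hwD, h⟩
      · exact Or.inl ⟨rfl, by rw [hε _ hv, h]⟩
      · exact Or.inr ⟨w, hw, hwD, (ih w hw hwD (notMem_utility_of_edge hw)).1 a b h⟩
    · rcases h with ⟨w, hw, hwD, h⟩ | ⟨c, ⟨w, hw, hwD, h⟩, ⟨w', hw', hwD', h'⟩⟩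
      · exact Or.inl ⟨w, hw, hwD, (ih w hw hwD (notMem_utility_of_edge hw)).2 a a' b h⟩
      · refine Or.inr ⟨!c, ⟨w, hw, hwD, (ih w hw hwD (notMem_utility_of_edge hw)).1 a c h⟩,
          ⟨w', hw', hwD', ?_⟩⟩
        rw [Bool.not_xor]
        exact (ih w' hw' hwD' (notMem_utility_of_edge hw')).1 a' _ h'

theorem reach_of_act [Finite V] (hm : G.SolvesSilenced X W ε m) (v : V) :
    v ∉ G.utility → (m v).act → Relation.ReflTransGen G.edge G.decision v := by
  induction v using edge_induction (G := G) with
  | h v ih =>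
    intro hu h
    by_cases hv : v = G.decision
    · exact hv ▸ .refl
    · rw [hm v hv hu] at h
      split_ifs at h
      · exact h.elim
      · obtain ⟨w, hw, h⟩ := h
        exact (ih w hw (notMem_utility_of_edge hw) h).tail hw

theorem parent_eq [Finite V] (hm : G.SolvesSilenced X W ε m) (hm' : G.SolvesSilenced X W ε' m')
    (hε : ∀ v, v ≠ G.decision → ε' v = !ε v) {w : V} (hw : G.edge w G.decision) :
    m w = m' w := by
  have hwD := ne_decision_of_transGen (.single hw)
  have hwu := notMem_utility_of_edge hw
  have hact : ¬ Relation.ReflTransGen G.edge G.decision w := fun h =>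
    G.acyclic _ (Relation.TransGen.tail' h hw)
  have hmem : ¬ (w ∉ G.condSet W ∧ w ≠ W) := fun h => h.1 ⟨Or.inr hw, h.2⟩
  ext
  · exact iff_of_false (hm.not_gate w hwD hwu) (hm'.not_gate w hwD hwu)
  · exact iff_of_false (fun h => hact (hm.reach_of_act w hwu h))
      (fun h => hact (hm'.reach_of_act w hwu h))
  · exact iff_of_false (fun h => hmem (hm.notMem_of_sec hwD hwu h))
      (fun h => hmem (hm'.notMem_of_sec hwD hwu h))
  · exact ⟨(hm.flip hm' hε w hwD hwu).2 _ _ _,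
      (hm'.flip hm (fun v hv => by rw [hε v hv, Bool.not_not]) w hwD hwu).2 _ _ _⟩

end SolvesSilenced

/-- The message-passing model, in which every exogenous variable is a fair coin. -/
noncomputable def messageModel [Finite V] (G : CID V) (X W T u : V) (g : Message V → ℝ)
    (hg : Function.Injective g) : SCIM V where
  toCID := G
  dom _ := Message V
  dom_fintype _ := Fintype.ofFinite _
  dom_nonempty _ := ⟨.empty⟩
  edom _ := Bool
  edom_fintype _ := inferInstance
  edom_nonempty _ := inferInstance
  utilVal _ := g
  utilVal_inj _ _ := hg
  f v _ inp e := G.messageFun X W T u v inp e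
  μ _ _ := 1 / 2
  μ_nonneg _ _ := by norm_num
  μ_sum _ := by simp

end CID

namespace SCIM

variable {V : Type} [Fintype V] [DecidableEq V] (M : SCIM V)

theorem solve_eq (mech : ∀ v, M.Mechanism v) (ε : M.Env) (v : V) :
    M.solve mech ε v = mech v (fun w _ => M.solve mech ε w) (ε v) :=
  WellFounded.fix_eq _ _ _

theorem polMech_of_ne (π : M.Policy) {v : V} (hv : v ≠ M.decision) :
    M.polMech π v = M.f v hv :=
  dif_neg hv

theorem polMech_decision (π : M.Policy) : M.polMech π M.decision = π :=
  dif_pos rfl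

theorem val_eq (π : M.Policy) (ε : M.Env) {v : V} (hv : v ≠ M.decision) :
    M.val π ε v = M.f v hv (fun w _ => M.val π ε w) (ε v) := by
  rw [val, solve_eq, polMech_of_ne M π hv]

theorem val_decision (π : M.Policy) (ε : M.Env) :
    M.val π ε M.decision = π (fun w _ => M.val π ε w) (ε M.decision) := by
  rw [val, solve_eq, polMech_decision]

theorem valDo_single_self (π : M.Policy) (X : V) (x : M.dom X) (ε : M.Env) :
    M.valDo π (M.single X x) ε X = x := by
  rw [valDo, solve_eq, doMech]
  simp [single]

theorem valDo_single_eq (π : M.Policy) {X : V} (x : M.dom X) (ε : M.Env) {v : V}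
    (hvX : v ≠ X) (hv : v ≠ M.decision) :
    M.valDo π (M.single X x) ε v =
      M.f v hv (fun w _ => M.valDo π (M.single X x) ε w) (ε v) := by
  rw [valDo, solve_eq, doMech]
  simp [single, hvX, polMech_of_ne M π hv]

theorem valDo_single_decision (π : M.Policy) {X : V} (x : M.dom X) (ε : M.Env)
    (hX : X ≠ M.decision) :
    M.valDo π (M.single X x) ε M.decision =
      π (fun w _ => M.valDo π (M.single X x) ε w) (ε M.decision) := by
  rw [valDo, solve_eq, doMech]
  simp [single, hX.symm, polMech_decision]

/-- If some policy attains a pointwise upper bound of the total utility and all exogenous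
settings have positive probability, then every optimal policy attains this bound. -/
theorem Optimal.totUtil_eq {M : SCIM V} {π : M.Policy} (hπ : M.Optimal π) {B : ℝ}
    (hpos : ∀ ε, 0 < M.prob ε) (hB : ∀ π' ε, M.totUtil (M.val π' ε) ≤ B) (π₀ : M.Policy)
    (h₀ : ∀ ε, M.totUtil (M.val π₀ ε) = B) (ε : M.Env) : M.totUtil (M.val π ε) = B := by
  by_contra h
  refine absurd (hπ π₀) (not_le.2 (Finset.sum_lt_sum (fun ε' _ => ?_) ⟨ε, Finset.mem_univ _, ?_⟩))
  · rw [h₀]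
    exact mul_le_mul_of_nonneg_left (hB π ε') (hpos ε').le
  · rw [h₀]
    exact mul_lt_mul_of_pos_left (lt_of_le_of_ne (hB π ε) h) (hpos ε)

end SCIM

namespace CID

variable {V : Type} [Fintype V] [DecidableEq V] {G : CID V} {X W T u : V} {g : Message V → ℝ}
  {hg : Function.Injective g}

theorem messageModel_solves (π : (G.messageModel X W T u g hg).Policy) (ε : V → Bool) :
    G.Solves X W ε ((G.messageModel X W T u g hg).val π ε) := by
  intro v hv hu
  refine ((G.messageModel X W T u g hg).val_eq π ε hv).trans ?_
  exact if_neg hu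

theorem messageModel_solvesSilenced (π : (G.messageModel X W T u g hg).Policy) (ε : V → Bool) :
    G.SolvesSilenced X W ε ((G.messageModel X W T u g hg).valDo π
      ((G.messageModel X W T u g hg).single X Message.empty) ε) := by
  intro v hv hu
  split_ifs with hvX
  · subst hvX
    exact (G.messageModel v W T u g hg).valDo_single_self π v Message.empty ε
  · refine ((G.messageModel X W T u g hg).valDo_single_eq π Message.empty ε hvX hv).trans ?_
    exact if_neg hu

theorem messageModel_totUtil (hu : u ∈ G.utility) (π : (G.messageModel X W T u g hg).Policy)
    (ε : V → Bool) :
    (G.messageModel X W T u g hg).totUtil ((G.messageModel X W T u g hg).val π ε) =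
      (if G.Wins T u (fun w _ => (G.messageModel X W T u g hg).val π ε w) then g .full
        else g .empty) + ∑ v ∈ G.utility.erase u, g .empty := by
  have hval : ∀ v ∈ G.utility, (G.messageModel X W T u g hg).val π ε v =
      G.messageFun X W T u v (fun w _ => (G.messageModel X W T u g hg).val π ε w) (ε v) :=
    fun v hv => (G.messageModel X W T u g hg).val_eq π ε fun h => by
      subst h
      exact G.decision_not_utility hv
  have key : ∀ m : V → Message V,
      (∀ v ∈ G.utility, m v = G.messageFun X W T u v (fun w _ => m w) (ε v)) →
      ∑ v ∈ G.utility, g (m v) = (if G.Wins T u (fun w _ => m w) then g .full else g .empty) +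
        ∑ v ∈ G.utility.erase u, g .empty := by
    intro m hm
    rw [← Finset.add_sum_erase _ _ hu]
    congr 1
    · rw [hm u hu]
      split_ifs with h <;> simp [messageFun, hu, h]
    · refine Finset.sum_congr rfl fun v hv => ?_
      rw [hm v (Finset.mem_of_mem_erase hv)]
      simp [messageFun, Finset.mem_of_mem_erase hv, Finset.ne_of_mem_erase hv]
  exact key _ hval

theorem messageModel_prob_pos (ε : (G.messageModel X W T u g hg).Env) :
    0 < (G.messageModel X W T u g hg).prob ε :=
  Finset.prod_pos fun _ _ => one_half_pos

/-- The policy that decodes the secret bit of `T` from the decision context. -/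
noncomputable def decodePolicy (G : CID V) (X W T u : V) (g : Message V → ℝ)
    (hg : Function.Injective g) : (G.messageModel X W T u g hg).Policy :=
  fun inp _ => if ∃ σ : V → Bool, G.Consistent σ inp ∧ σ T = true then Message.full
    else Message.empty

theorem decodePolicy_act (hW : G.edge W G.decision) (hX : Relation.ReflTransGen G.edge X W)
    (hT : G.Known W T) (ε : V → Bool) :
    Message.act ((G.messageModel X W T u g hg).val (G.decodePolicy X W T u g hg) ε G.decision) ↔
      ε T = true := by
  have hm := messageModel_solves (G.decodePolicy X W T u g hg) ε
  have hD : (G.messageModel X W T u g hg).val (G.decodePolicy X W T u g hg) ε G.decision =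
      if ∃ σ : V → Bool, G.Consistent σ (fun w _ => (G.messageModel X W T u g hg).val
        (G.decodePolicy X W T u g hg) ε w) ∧ σ T = true then Message.full else Message.empty :=
    (G.messageModel X W T u g hg).val_decision _ ε
  rw [hD]
  constructor
  · intro h
    split_ifs at h with hσ
    · obtain ⟨σ, hσ, hσT⟩ := hσ
      rw [← hm.eq_of_consistent hW hX hσ hT, hσT]
    · exact h.elim
  · intro h
    rw [if_pos ⟨ε, hm.consistent, h⟩]
    trivial

theorem messageModel_act_of_optimal (hW : G.edge W G.decision)
    (hX : Relation.ReflTransGen G.edge X W) (hu : u ∈ G.utility)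
    (hDu : Relation.ReflTransGen G.edge G.decision u) (hT : G.Known W T) {p : V}
    (hTp : G.HiddenReach W T p) (hp : G.edge p u) (hlt : g .empty < g .full)
    {π : (G.messageModel X W T u g hg).Policy} (hπ : (G.messageModel X W T u g hg).Optimal π)
    (ε : V → Bool) :
    Message.act ((G.messageModel X W T u g hg).val π ε G.decision) ↔ ε T = true := by
  have hwins := fun π ε => (messageModel_solves (G := G) (X := X) (W := W) (T := T) (u := u)
    (g := g) (hg := hg) π ε).wins_iff hW hX hTp hp hu hDu
  have h := hπ.totUtil_eq (B := g .full + ∑ v ∈ G.utility.erase u, g .empty)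
    messageModel_prob_pos (fun π' ε' => ?_) (G.decodePolicy X W T u g hg) (fun ε' => ?_) ε
  · replace h := add_right_cancel ((messageModel_totUtil hu π ε).symm.trans h)
    refine (hwins π ε).1 ?_
    by_contra hcon
    rw [if_neg hcon] at h
    exact hlt.ne h
  · refine (messageModel_totUtil hu π' ε').trans_le ?_
    refine add_le_add ?_ le_rfl
    split_ifs
    exacts [le_rfl, hlt.le]
  · refine (messageModel_totUtil hu _ ε').trans ?_
    rw [if_pos ((hwins _ ε').2 (decodePolicy_act hW hX hT ε'))]

end CID

/-- **Response incentive graphical criterion: completeness.**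
If there are a parent `W` of the decision `D` and a utility node `U` such that `G` has a
directed path `X ⇝ W`, a directed path `D ⇝ U`, and `W` is d-connected to `U` given
`({D} ∪ Pa_D) \ {W}`, then some SCIM compatible with `G` has a response incentive
on `X ≠ D`. -/
theorem response_incentive_criterion_completeness
    {V : Type} [Fintype V] [DecidableEq V] (G : CID V) (X : V) (hX : X ≠ G.decision)
    (h : RICriterion G X) :
    ∃ M : SCIM V, M.toCID = G ∧ M.ResponseIncentive X := by
  obtain ⟨W, hW, u, hu, hXW, hDu, hsep⟩ := h
  obtain ⟨T, p, hT, hTp, hp⟩ := CID.exists_known hW hu hsep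
  obtain ⟨g, hg, hlt⟩ := Message.exists_utility (V := V)
  refine ⟨G.messageModel X W T u g hg, rfl, fun π hπ => ?_⟩
  by_contra! hcon
  have hact := CID.messageModel_act_of_optimal hW hXW hu hDu hT hTp hp hlt hπ
  let ε : V → Bool := fun _ => true
  let ε' : V → Bool := fun v => if v = G.decision then true else false
  have hTD : T ≠ G.decision := CID.ne_decision_of_notMem hW hTp.source_notMem
  have hε : ∀ v, v ≠ G.decision → ε' v = !ε v := fun v hv => if_neg hv
  have heq : (G.messageModel X W T u g hg).val π ε G.decision =
      (G.messageModel X W T u g hg).val π ε' G.decision := by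
    refine (hcon Message.empty ε).symm.trans (Eq.trans ?_ (hcon Message.empty ε'))
    let M := G.messageModel X W T u g hg
    refine (M.valDo_single_decision π Message.empty ε hX).trans
      (Eq.trans ?_ (M.valDo_single_decision π Message.empty ε' hX).symm)
    refine congrArg₂ π (funext fun w => funext fun hw => ?_) (if_pos rfl).symm
    exact (CID.messageModel_solvesSilenced π ε).parent_eq
      (CID.messageModel_solvesSilenced π ε') hε hw
  have h' := (hact ε').1 (heq ▸ (hact ε).2 rfl)
  rw [hε T hTD] at h'
  exact absurd h' (by simp [ε])
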